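/- As t ↑ T, √λ_t · ‖f_t ⊗₁ f_t‖ converges to √5/(2(2α−1)); in particular ‖f_t ⊗₁ f_t‖ → 0 as t ↑ T. -/

import Mathlib

open MeasureTheory Real Filter Topology

/-- `λ_t := |log(T−t)|/(2α−1)`. -/
noncomputable def lam (T α t : ℝ) : ℝ := |Real.log (T - t)| / (2 * α - 1)

/-- The kernel `f_t`. -/
noncomputable def fker (T α t : ℝ) (u v : ℝ) : ℝ :=
  if u ∈ Set.Icc (0:ℝ) t ∧ v ∈ Set.Icc (0:ℝ) t then
    (1 / (2 * Real.sqrt (lam T α t))) * (T - max u v) ^ (α - 1) * (T - min u v) ^ (-α)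
  else 0

/-- The kernel `g_t`. -/
noncomputable def gker (T α t : ℝ) (u v : ℝ) : ℝ :=
  if u ∈ Set.Icc (0:ℝ) t ∧ v ∈ Set.Icc (0:ℝ) t then
    (T - u) ^ (-α) * (T - v) ^ (-α) *
      ((T - max u v) ^ (2 * α - 1) - (T - t) ^ (2 * α - 1)) / |Real.log (T - t)|
  else 0

/-- `⟨p,q⟩ := ∫_{[0,T]²} p(u,v) q(u,v) du dv`. -/
noncomputable def ip (T : ℝ) (p q : ℝ → ℝ → ℝ) : ℝ :=
  ∫ u in Set.Icc (0:ℝ) T, ∫ v in Set.Icc (0:ℝ) T, p u v * q u v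

/-- `‖p‖² := ⟨p,p⟩`. -/
noncomputable def normSq (T : ℝ) (p : ℝ → ℝ → ℝ) : ℝ := ip T p p

/-- The contraction `(p ⊗₁ q)(x,y) := ∫₀^T p(x,u) q(y,u) du`. -/
noncomputable def contr (T : ℝ) (p q : ℝ → ℝ → ℝ) : ℝ → ℝ → ℝ :=
  fun x y => ∫ u in Set.Icc (0:ℝ) T, p x u * q y u

/-- `b_t := (1/λ_t)·∫₀ᵗ ∫₀ˢ (T−s)^{2α−2}(T−u)^{−2α} du ds`. -/
noncomputable def bfun (T α t : ℝ) : ℝ :=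
  (1 / lam T α t) *
    ∫ s in (0:ℝ)..t, ∫ u in (0:ℝ)..s, (T - s) ^ (2 * α - 2) * (T - u) ^ (-(2 * α))

/-- `A_{t,1}`. -/
noncomputable def A1 (T α t : ℝ) : ℝ :=
  (1 / (lam T α t) ^ 2) *
    ∫ x4 in (0:ℝ)..t, ∫ x3 in (0:ℝ)..x4, ∫ x2 in (0:ℝ)..x3, ∫ x1 in (0:ℝ)..x2,
      (T - x4) ^ (2 * α - 2) * (T - x3) ^ (-1 : ℝ) * (T - x2) ^ (-1 : ℝ) *
        (T - x1) ^ (-(2 * α))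

/-- `A_{t,2}`. -/
noncomputable def A2 (T α t : ℝ) : ℝ :=
  (1 / (2 * (lam T α t) ^ 2)) *
    ∫ x4 in (0:ℝ)..t, ∫ x2 in (0:ℝ)..x4, ∫ x3 in (0:ℝ)..x2, ∫ x1 in (0:ℝ)..x3,
      (T - x4) ^ (2 * α - 2) * (T - x2) ^ (2 * α - 2) * (T - x3) ^ (-(2 * α)) *
        (T - x1) ^ (-(2 * α))

/-!
The substitution `u = T - T * exp (-s)` carries `f_t` unitarily to the convolution kernel
`(2 * √λ_t)⁻¹ * k (s - r)`, `k x = exp (-(α - 1 / 2) * |x|)`, truncated to `[0, L]²` with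
`L = log (T / (T - t))`. The squared Hilbert–Schmidt norm of the square of the truncation of `k`
grows like `L * ∫ (k ⋆ k) ^ 2`, as in Szegő-type limit theorems: the row at height `x = L * s`,
`0 < s < 1`, sees the window `[x - L, x]`, which exhausts the line. Since
`(k ⋆ k) z = (1 / a + |z|) * exp (-a * |z|)` with `a = α - 1 / 2`, the integral is
`5 / (2 * a ^ 3)`, and `L / λ_t → 2 * α - 1`.
-/

open scoped Convolution
open ContinuousLinearMap (lsmul)

section SquareIntegrable

variable {G : Type*} [AddCommGroup G] [MeasurableSpace G] {μ : Measure G} {p q : G → ℝ}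

theorem indicator_convolution_eq_setIntegral {s : Set G} (hs : MeasurableSet s) (z : G) :
    (s.indicator p ⋆[lsmul ℝ ℝ, μ] q) z = ∫ w in s, p w * q (z - w) ∂μ := by
  rw [convolution_lsmul, ← integral_indicator hs]
  congr with w
  by_cases hw : w ∈ s <;> simp [hw]

variable [MeasurableAdd₂ G] [MeasurableNeg G] [μ.IsAddLeftInvariant] [μ.IsNegInvariant]

theorem memLp_comp_sub_left {E : Type*} [NormedAddCommGroup E] {r : ENNReal} {f : G → E}
    (hf : MemLp f r μ) (z : G) : MemLp (fun w => f (z - w)) r μ :=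
  hf.comp_measurePreserving (μ.measurePreserving_sub_left z)

theorem integrable_mul_comp_sub_left (hp : MemLp p 2 μ) (hq : MemLp q 2 μ) (z : G) :
    Integrable (fun w => p w * q (z - w)) μ :=
  hp.integrable_mul (memLp_comp_sub_left hq z)

theorem abs_convolution_le_of_memLp_two (hp : MemLp p 2 μ) (hq : MemLp q 2 μ) (z : G) :
    |(p ⋆[lsmul ℝ ℝ, μ] q) z| ≤ ((∫ w, p w ^ 2 ∂μ) + ∫ w, q w ^ 2 ∂μ) / 2 := by
  have hq' := (memLp_comp_sub_left hq z).integrable_sq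
  calc |∫ w, p w * q (z - w) ∂μ|
      ≤ ∫ w, |p w * q (z - w)| ∂μ := abs_integral_le_integral_abs
    _ ≤ ∫ w, (p w ^ 2 + q (z - w) ^ 2) / 2 ∂μ := by
        refine integral_mono (integrable_mul_comp_sub_left hp hq z).abs
          ((hp.integrable_sq.add hq').div_const 2) fun w => ?_
        have := two_mul_le_add_sq |p w| |q (z - w)|
        rw [sq_abs, sq_abs] at this
        simp only [abs_mul]
        linarith
    _ = ((∫ w, p w ^ 2 ∂μ) + ∫ w, q w ^ 2 ∂μ) / 2 := by
        rw [integral_div, integral_add hp.integrable_sq hq',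
          integral_sub_left_eq_self (fun w => q w ^ 2) μ z]

theorem abs_indicator_convolution_le (hp : MemLp p 2 μ) (hq : MemLp q 2 μ) {s : Set G}
    (hs : MeasurableSet s) (z : G) :
    |(s.indicator p ⋆[lsmul ℝ ℝ, μ] q) z| ≤ (|p| ⋆[lsmul ℝ ℝ, μ] |q|) z := by
  have habs := (integrable_mul_comp_sub_left hp hq z).abs
  simp only [abs_mul] at habs
  rw [indicator_convolution_eq_setIntegral hs]
  calc |∫ w in s, p w * q (z - w) ∂μ|
      ≤ ∫ w in s, |p w * q (z - w)| ∂μ := abs_integral_le_integral_abs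
    _ = ∫ w in s, |p w| * |q (z - w)| ∂μ := by simp only [abs_mul]
    _ ≤ ∫ w, |p w| * |q (z - w)| ∂μ :=
        setIntegral_le_integral habs (Eventually.of_forall fun w => by positivity)

theorem sq_indicator_convolution_le (hp : MemLp p 2 μ) (hq : MemLp q 2 μ) {s : Set G}
    (hs : MeasurableSet s) (z : G) :
    (s.indicator p ⋆[lsmul ℝ ℝ, μ] q) z ^ 2 ≤ (|p| ⋆[lsmul ℝ ℝ, μ] |q|) z ^ 2 :=
  sq_le_sq.2 ((abs_indicator_convolution_le hp hq hs z).trans (le_abs_self _))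

theorem tendsto_indicator_convolution {ι : Type*} {l : Filter ι} [l.IsCountablyGenerated]
    {φ : ι → Set G} (hφ : AECover μ l φ) (hp : MemLp p 2 μ) (hq : MemLp q 2 μ) (z : G) :
    Tendsto (fun i => ((φ i).indicator p ⋆[lsmul ℝ ℝ, μ] q) z) l
      (𝓝 ((p ⋆[lsmul ℝ ℝ, μ] q) z)) := by
  simp only [indicator_convolution_eq_setIntegral (hφ.measurableSet _)]
  exact hφ.integral_tendsto_of_countably_generated (integrable_mul_comp_sub_left hp hq z)

variable [SFinite μ]

theorem integrable_sq_convolution (hp : Integrable p μ) (hp2 : MemLp p 2 μ) (hq : Integrable q μ)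
    (hq2 : MemLp q 2 μ) : Integrable (fun z => (p ⋆[lsmul ℝ ℝ, μ] q) z ^ 2) μ := by
  have hpq : Integrable (p ⋆[lsmul ℝ ℝ, μ] q) μ := hp.integrable_convolution (lsmul ℝ ℝ) hq
  simp only [sq]
  exact hpq.bdd_mul hpq.aestronglyMeasurable
    (Eventually.of_forall (abs_convolution_le_of_memLp_two hp2 hq2))

theorem setIntegral_sq_indicator_convolution_le (hp : Integrable p μ) (hp2 : MemLp p 2 μ)
    (hq : Integrable q μ) (hq2 : MemLp q 2 μ) {s : Set G} (hs : MeasurableSet s) :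
    ∫ z in s, (s.indicator p ⋆[lsmul ℝ ℝ, μ] q) z ^ 2 ∂μ ≤
      ∫ z, (|p| ⋆[lsmul ℝ ℝ, μ] |q|) z ^ 2 ∂μ := by
  have hs2 := integrable_sq_convolution (hp.indicator hs) (hp2.indicator hs) hq hq2
  exact (setIntegral_le_integral hs2 (Eventually.of_forall fun z => sq_nonneg _)).trans
    (integral_mono hs2 (integrable_sq_convolution hp.abs hp2.abs hq.abs hq2.abs)
      fun z => sq_indicator_convolution_le hp2 hq2 hs z)

theorem tendsto_setIntegral_sq_indicator_convolution {ι : Type*} {l : Filter ι}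
    [l.IsCountablyGenerated] {φ : ι → Set G} (hφ : AECover μ l φ) (hp : Integrable p μ)
    (hp2 : MemLp p 2 μ) (hq : Integrable q μ) (hq2 : MemLp q 2 μ) :
    Tendsto (fun i => ∫ z in φ i, ((φ i).indicator p ⋆[lsmul ℝ ℝ, μ] q) z ^ 2 ∂μ) l
      (𝓝 (∫ z, (p ⋆[lsmul ℝ ℝ, μ] q) z ^ 2 ∂μ)) := by
  simp only [← integral_indicator (hφ.measurableSet _)]
  refine tendsto_integral_filter_of_dominated_convergence
    (fun z => (|p| ⋆[lsmul ℝ ℝ, μ] |q|) z ^ 2) (Eventually.of_forall fun i => ?_)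
    (Eventually.of_forall fun i => Eventually.of_forall fun z => ?_)
    (integrable_sq_convolution hp.abs hp2.abs hq.abs hq2.abs) ?_
  · have hi := hφ.measurableSet i
    exact (integrable_sq_convolution (hp.indicator hi) (hp2.indicator hi) hq
      hq2).aestronglyMeasurable.indicator hi
  · refine (norm_indicator_le_norm_self _ z).trans ?_
    rw [norm_of_nonneg (sq_nonneg _)]
    exact sq_indicator_convolution_le hp2 hq2 (hφ.measurableSet i) z
  · filter_upwards [hφ.ae_eventually_mem] with z hz
    refine ((tendsto_indicator_convolution hφ hp2 hq2 z).pow 2).congr' ?_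
    filter_upwards [hz] with i hi
    rw [Set.indicator_of_mem hi]

end SquareIntegrable

section WienerHopf

variable {p q : ℝ → ℝ}

theorem setIntegral_Icc_comp_sub_left {E : Type*} [NormedAddCommGroup E] [NormedSpace ℝ E]
    (f : ℝ → E) (x L : ℝ) :
    ∫ u in Set.Icc 0 L, f (x - u) = ∫ w in Set.Icc (x - L) x, f w := by
  have h := (volume.measurePreserving_sub_left x).setIntegral_preimage_emb
    (measurableEmbedding_subLeft x) f (Set.Icc (x - L) x)
  rwa [Set.preimage_const_sub_Icc, sub_self, sub_sub_cancel] at h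

/-- The `x`-th row of the squared Hilbert–Schmidt norm of the product of the truncations to `[0, L]`
of the convolution operators with kernels `p` and `q`. -/
noncomputable def truncatedRowEnergy (p q : ℝ → ℝ) (L x : ℝ) : ℝ :=
  ∫ y in Set.Icc 0 L, (∫ u in Set.Icc 0 L, p (x - u) * q (u - y)) ^ 2

theorem truncatedRowEnergy_eq (p q : ℝ → ℝ) (L x : ℝ) :
    truncatedRowEnergy p q L x =
      ∫ z in Set.Icc (x - L) x, ((Set.Icc (x - L) x).indicator p ⋆ q) z ^ 2 := by
  rw [← setIntegral_Icc_comp_sub_left, truncatedRowEnergy]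
  congr with y
  rw [indicator_convolution_eq_setIntegral measurableSet_Icc, ← setIntegral_Icc_comp_sub_left]
  congr with u
  ring_nf

theorem truncatedRowEnergy_nonneg (p q : ℝ → ℝ) (L x : ℝ) : 0 ≤ truncatedRowEnergy p q L x :=
  integral_nonneg fun _ => sq_nonneg _

theorem truncatedRowEnergy_le (hp : Integrable p) (hp2 : MemLp p 2) (hq : Integrable q)
    (hq2 : MemLp q 2) (L x : ℝ) : truncatedRowEnergy p q L x ≤ ∫ z, (|p| ⋆ |q|) z ^ 2 := by
  rw [truncatedRowEnergy_eq]
  exact setIntegral_sq_indicator_convolution_le hp hp2 hq hq2 measurableSet_Icc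

theorem aestronglyMeasurable_truncatedRowEnergy (hp : AEStronglyMeasurable p)
    (hq : AEStronglyMeasurable q) (L : ℝ) : AEStronglyMeasurable (truncatedRowEnergy p q L) := by
  set ν : Measure ℝ := volume.restrict (Set.Icc 0 L)
  have hν : ν ≪ volume := Measure.restrict_le_self.absolutelyContinuous
  have hsub := quasiMeasurePreserving_sub (volume : Measure ℝ) volume
  have hac : ((volume : Measure ℝ).prod ν).prod ν ≪ (volume.prod volume).prod volume :=
    (Measure.AbsolutelyContinuous.rfl.prod hν).prod hν
  have hp' : AEStronglyMeasurable (fun a : (ℝ × ℝ) × ℝ => p (a.1.1 - a.2))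
      ((volume.prod volume).prod volume) :=
    hp.comp_quasiMeasurePreserving
      (hsub.comp (QuasiMeasurePreserving.prodMap Measure.quasiMeasurePreserving_fst (.id volume)))
  have hq' : AEStronglyMeasurable (fun a : (ℝ × ℝ) × ℝ => q (a.2 - a.1.2))
      ((volume.prod volume).prod volume) :=
    hq.comp_quasiMeasurePreserving (hsub.comp
      (Measure.measurePreserving_swap.quasiMeasurePreserving.comp
        (QuasiMeasurePreserving.prodMap Measure.quasiMeasurePreserving_snd (.id volume))))
  exact (((hp'.mul hq').mono_ac hac).integral_prod_right'.pow 2).integral_prod_right'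

theorem tendsto_truncatedRowEnergy (hp : Integrable p) (hp2 : MemLp p 2) (hq : Integrable q)
    (hq2 : MemLp q 2) {s : ℝ} (hs : s ∈ Set.Ioo 0 1) :
    Tendsto (fun L => truncatedRowEnergy p q L (L * s)) atTop (𝓝 (∫ z, (p ⋆ q) z ^ 2)) := by
  simp only [truncatedRowEnergy_eq]
  refine tendsto_setIntegral_sq_indicator_convolution (aecover_Icc ?_ ?_) hp hp2 hq hq2
  · exact (tendsto_id.atTop_mul_const_of_neg (sub_neg.2 hs.2)).congr fun L => by
      simp only [id]; ring
  · exact tendsto_id.atTop_mul_const hs.1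

theorem tendsto_setIntegral_Icc_div {F : ℝ → ℝ → ℝ} {C c : ℝ}
    (hmeas : ∀ L, AEStronglyMeasurable (F L)) (hbound : ∀ L x, |F L x| ≤ C)
    (hlim : ∀ s ∈ Set.Ioo (0 : ℝ) 1, Tendsto (fun L => F L (L * s)) atTop (𝓝 c)) :
    Tendsto (fun L => (∫ x in Set.Icc 0 L, F L x) / L) atTop (𝓝 c) := by
  have hdct : Tendsto (fun L => ∫ s in Set.Ioo (0 : ℝ) 1, F L (L * s)) atTop
      (𝓝 (∫ _ in Set.Ioo (0 : ℝ) 1, c)) := by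
    refine tendsto_integral_filter_of_dominated_convergence (fun _ => C) ?_
      (Eventually.of_forall fun L => Eventually.of_forall fun s => hbound L _)
      (integrable_const C) ((ae_restrict_iff' measurableSet_Ioo).2 (Eventually.of_forall hlim))
    filter_upwards [eventually_ne_atTop 0] with L hL
    exact ((hmeas L).comp_quasiMeasurePreserving
      (Measure.quasiMeasurePreserving_smul volume hL)).restrict
  rw [setIntegral_const, volume_real_Ioo_of_le zero_le_one, sub_zero, one_smul] at hdct
  refine hdct.congr' ?_
  filter_upwards [eventually_gt_atTop 0] with L hL
  rw [← integral_Ioc_eq_integral_Ioo, ← intervalIntegral.integral_of_le zero_le_one,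
    intervalIntegral.integral_comp_mul_left _ hL.ne', mul_zero, mul_one,
    intervalIntegral.integral_of_le hL.le, integral_Icc_eq_integral_Ioc, smul_eq_mul,
    inv_mul_eq_div]

theorem tendsto_integral_sq_truncatedConvolution_div (hp : Integrable p) (hp2 : MemLp p 2)
    (hq : Integrable q) (hq2 : MemLp q 2) :
    Tendsto (fun L => (∫ x in Set.Icc 0 L, ∫ y in Set.Icc 0 L,
        (∫ u in Set.Icc 0 L, p (x - u) * q (u - y)) ^ 2) / L)
      atTop (𝓝 (∫ z, (p ⋆ q) z ^ 2)) :=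
  tendsto_setIntegral_Icc_div
    (aestronglyMeasurable_truncatedRowEnergy hp.aestronglyMeasurable hq.aestronglyMeasurable)
    (fun L x => (abs_of_nonneg (truncatedRowEnergy_nonneg p q L x)).trans_le
      (truncatedRowEnergy_le hp hp2 hq hq2 L x))
    fun _ => tendsto_truncatedRowEnergy hp hp2 hq hq2

end WienerHopf

section Exponential

variable {a : ℝ}

theorem integral_pow_mul_exp_neg_mul_Ioi {b : ℝ} (hb : 0 < b) (n : ℕ) :
    ∫ x in Set.Ioi 0, x ^ n * exp (-(b * x)) = n.factorial / b ^ (n + 1) := by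
  have h := integral_rpow_mul_exp_neg_mul_Ioi (by positivity : (0 : ℝ) < n + 1) hb
  rw [Gamma_nat_eq_factorial] at h
  simp only [add_sub_cancel_right, rpow_natCast] at h
  rw [h, one_div, inv_rpow hb.le, inv_mul_eq_div]
  norm_cast

theorem integrableOn_pow_mul_exp_neg_mul_Ioi {b : ℝ} (hb : 0 < b) (n : ℕ) :
    IntegrableOn (fun x => x ^ n * exp (-(b * x))) (Set.Ioi 0) :=
  .of_integral_ne_zero (by rw [integral_pow_mul_exp_neg_mul_Ioi hb]; positivity)

theorem integral_exp_neg_mul_abs (ha : 0 < a) : ∫ x, exp (-(a * |x|)) = 2 / a := by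
  have h := integral_pow_mul_exp_neg_mul_Ioi ha 0
  simp only [pow_zero, one_mul, Nat.factorial_zero, Nat.cast_one, zero_add, pow_one] at h
  rw [integral_comp_abs (f := fun x => exp (-(a * x))), h, mul_one_div]

theorem integrable_exp_neg_mul_abs (ha : 0 < a) : Integrable fun x => exp (-(a * |x|)) :=
  .of_integral_ne_zero (by rw [integral_exp_neg_mul_abs ha]; positivity)

theorem memLp_two_exp_neg_mul_abs (ha : 0 < a) : MemLp (fun x => exp (-(a * |x|))) 2 := by
  rw [memLp_two_iff_integrable_sq (by fun_prop)]
  refine (integrable_exp_neg_mul_abs (mul_pos two_pos ha)).congr (.of_forall fun x => ?_)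
  simp only [← exp_nat_mul]
  ring_nf

theorem convolution_exp_neg_mul_abs_self_of_nonneg (ha : 0 < a) {z : ℝ} (hz : 0 ≤ z) :
    ((fun x => exp (-(a * |x|))) ⋆ fun x => exp (-(a * |x|))) z =
      (1 / a + z) * exp (-(a * z)) := by
  have h2a : 0 < 2 * a := mul_pos two_pos ha
  have hk := memLp_two_exp_neg_mul_abs ha
  have hint := integrable_mul_comp_sub_left hk hk z
  have hleft : ∫ w in Set.Iic 0, exp (-(a * |w|)) * exp (-(a * |z - w|)) =
      exp (-(a * z)) / (2 * a) := by
    have hcongr : ∀ w ∈ Set.Iic 0, exp (-(a * |w|)) * exp (-(a * |z - w|)) =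
        exp (-(a * z)) * exp (2 * a * w) := fun w (hw : w ≤ 0) => by
      rw [← exp_add, ← exp_add, abs_of_nonpos hw, abs_of_nonneg (by linarith)]
      ring_nf
    rw [setIntegral_congr_fun measurableSet_Iic hcongr, integral_const_mul,
      integral_exp_mul_Iic h2a, mul_zero, exp_zero, mul_one_div]
  have hmiddle : ∫ w in 0..z, exp (-(a * |w|)) * exp (-(a * |z - w|)) =
      z * exp (-(a * z)) := by
    rw [intervalIntegral.integral_congr (g := fun _ => exp (-(a * z))),
      intervalIntegral.integral_const, sub_zero, smul_eq_mul]
    intro w hw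
    rw [Set.uIcc_of_le hz] at hw
    simp only [← exp_add, abs_of_nonneg hw.1, abs_of_nonneg (sub_nonneg.2 hw.2)]
    ring_nf
  have hright : ∫ w in Set.Ioi z, exp (-(a * |w|)) * exp (-(a * |z - w|)) =
      exp (-(a * z)) / (2 * a) := by
    have hcongr : ∀ w ∈ Set.Ioi z, exp (-(a * |w|)) * exp (-(a * |z - w|)) =
        exp (a * z) * exp (-(2 * a) * w) := fun w (hw : z < w) => by
      rw [← exp_add, ← exp_add, abs_of_pos (hz.trans_lt hw), abs_of_neg (sub_neg.2 hw)]
      ring_nf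
    rw [setIntegral_congr_fun measurableSet_Ioi hcongr, integral_const_mul,
      integral_exp_mul_Ioi (neg_lt_zero.2 h2a), neg_div_neg_eq, ← mul_div_assoc, ← exp_add]
    ring_nf
  rw [convolution_lsmul]
  simp only [smul_eq_mul]
  rw [← intervalIntegral.integral_Iic_add_Ioi hint.integrableOn hint.integrableOn,
    ← intervalIntegral.integral_interval_add_Ioi hint.integrableOn hint.integrableOn, hleft,
    hmiddle, hright]
  field_simp
  ring

theorem convolution_exp_neg_mul_abs_self (ha : 0 < a) (z : ℝ) :
    ((fun x => exp (-(a * |x|))) ⋆ fun x => exp (-(a * |x|))) z =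
      (1 / a + |z|) * exp (-(a * |z|)) := by
  rw [← convolution_exp_neg_mul_abs_self_of_nonneg ha (abs_nonneg z)]
  rcases abs_choice z with h | h <;> rw [h]
  refine (convolution_neg_of_neg_eq _ ?_ ?_).symm <;> simp

theorem integral_sq_convolution_exp_neg_mul_abs (ha : 0 < a) :
    ∫ z, ((fun x => exp (-(a * |x|))) ⋆ fun x => exp (-(a * |x|))) z ^ 2 =
      5 / (2 * a ^ 3) := by
  have h2a : 0 < 2 * a := mul_pos two_pos ha
  have hint := integrableOn_pow_mul_exp_neg_mul_Ioi h2a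
  have hval := integral_pow_mul_exp_neg_mul_Ioi h2a
  have hadd (c d : ℝ) : IntegrableOn (fun x => c * (x ^ 0 * exp (-(2 * a * x))) +
      d * (x ^ 1 * exp (-(2 * a * x)))) (Set.Ioi 0) :=
    ((hint 0).const_mul c).add ((hint 1).const_mul d)
  have hexpand : ∀ x : ℝ, ((1 / a + x) * exp (-(a * x))) ^ 2 =
      1 / a ^ 2 * (x ^ 0 * exp (-(2 * a * x))) + 2 / a * (x ^ 1 * exp (-(2 * a * x))) +
        x ^ 2 * exp (-(2 * a * x)) := fun x => by
    rw [mul_pow, ← exp_nat_mul]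
    push_cast
    ring_nf
  simp only [convolution_exp_neg_mul_abs_self ha]
  rw [integral_comp_abs (f := fun x => ((1 / a + x) * exp (-(a * x))) ^ 2)]
  simp only [hexpand]
  rw [integral_add (hadd _ _) (hint 2), integral_add ((hint 0).const_mul _)
    ((hint 1).const_mul _), integral_const_mul, integral_const_mul, hval, hval, hval]
  norm_num [Nat.factorial]
  field_simp
  ring

end Exponential

section LogTime

variable {T α t : ℝ}

theorem setIntegral_Ici_eq_setIntegral_Icc {E : Type*} [NormedAddCommGroup E] [NormedSpace ℝ E]
    {a b : ℝ} {f : ℝ → E} (hf : ∀ s ∉ Set.Icc a b, f s = 0) :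
    ∫ s in Set.Ici a, f s = ∫ s in Set.Icc a b, f s :=
  setIntegral_eq_of_subset_of_forall_sdiff_eq_zero measurableSet_Ici Set.Icc_subset_Ici_self
    fun s hs => hf s hs.2

theorem image_sub_mul_exp_neg_Ici (hT : 0 < T) :
    (fun s => T - T * exp (-s)) '' Set.Ici 0 = Set.Ico 0 T := by
  ext u
  constructor
  · rintro ⟨s, hs, rfl⟩
    have hs' : exp (-s) ≤ 1 := exp_le_one_iff.2 (neg_nonpos.2 hs)
    exact ⟨sub_nonneg.2 (mul_le_of_le_one_right hT.le hs'), sub_lt_self _ (by positivity)⟩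
  · rintro ⟨hu, huT⟩
    have hpos : 0 < (T - u) / T := div_pos (sub_pos.2 huT) hT
    refine ⟨-log ((T - u) / T), neg_nonneg.2 (log_nonpos hpos.le ?_), ?_⟩
    · rw [div_le_one hT]
      linarith
    · simp only [neg_neg, exp_log hpos]
      field_simp
      ring

theorem setIntegral_Icc_eq_setIntegral_Ici_exp_neg {E : Type*} [NormedAddCommGroup E]
    [NormedSpace ℝ E] (hT : 0 < T) (f : ℝ → E) :
    ∫ u in Set.Icc 0 T, f u = ∫ s in Set.Ici 0, (T * exp (-s)) • f (T - T * exp (-s)) := by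
  have hderiv (s : ℝ) : HasDerivAt (fun s => T - T * exp (-s)) (T * exp (-s)) s := by
    simpa using (((hasDerivAt_neg s).exp).const_mul T).const_sub T
  have hinj : Function.Injective fun s => T - T * exp (-s) := fun s r h => by
    simpa [hT.ne'] using h
  rw [integral_Icc_eq_integral_Ico, ← image_sub_mul_exp_neg_Ici hT,
    integral_image_eq_integral_abs_deriv_smul measurableSet_Ici
      (fun s _ => (hderiv s).hasDerivWithinAt) hinj.injOn]
  congr with s
  rw [abs_of_pos (by positivity)]

/-- The kernel on `[0, ∞)²` corresponding to a kernel `p` on `[0, T]²` under the unitary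
`L²[0, T] → L²[0, ∞)` given by the logarithmic time change `u = T - T * exp (-s)`. -/
noncomputable def logTimeKernel (T : ℝ) (p : ℝ → ℝ → ℝ) (s r : ℝ) : ℝ :=
  T * exp (-(s + r) / 2) * p (T - T * exp (-s)) (T - T * exp (-r))

theorem logTimeKernel_contr (hT : 0 < T) (p q : ℝ → ℝ → ℝ) (s r : ℝ) :
    logTimeKernel T (contr T p q) s r =
      ∫ w in Set.Ici 0, logTimeKernel T p s w * logTimeKernel T q r w := by
  rw [logTimeKernel, contr, setIntegral_Icc_eq_setIntegral_Ici_exp_neg hT, ← integral_const_mul]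
  congr with w
  have hexp : exp (-(s + w) / 2) * exp (-(r + w) / 2) = exp (-(s + r) / 2) * exp (-w) := by
    rw [← exp_add, ← exp_add]
    ring_nf
  simp only [logTimeKernel, smul_eq_mul]
  linear_combination (-T ^ 2 * p (T - T * exp (-s)) (T - T * exp (-w)) *
    q (T - T * exp (-r)) (T - T * exp (-w))) * hexp

theorem normSq_eq_setIntegral_sq_logTimeKernel (hT : 0 < T) (p : ℝ → ℝ → ℝ) :
    normSq T p = ∫ s in Set.Ici 0, ∫ r in Set.Ici 0, logTimeKernel T p s r ^ 2 := by
  simp only [normSq, ip, setIntegral_Icc_eq_setIntegral_Ici_exp_neg hT, smul_eq_mul,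
    ← integral_const_mul]
  congr with s
  congr with r
  have hexp : exp (-(s + r) / 2) ^ 2 = exp (-s) * exp (-r) := by
    rw [← exp_nat_mul, ← exp_add]
    push_cast
    ring_nf
  rw [logTimeKernel, mul_pow, mul_pow, hexp]
  ring

/-- The logarithmic time at which `T - T * exp (-s)` reaches `t`. -/
noncomputable def logTime (T t : ℝ) : ℝ := log (T / (T - t))

theorem sub_mul_exp_neg_mem_Icc_iff (hT : 0 < T) (ht : t < T) {s : ℝ} :
    T - T * exp (-s) ∈ Set.Icc 0 t ↔ s ∈ Set.Icc 0 (logTime T t) := by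
  have hlow : 0 ≤ T - T * exp (-s) ↔ 0 ≤ s := by
    rw [sub_nonneg, mul_le_iff_le_one_right hT, exp_le_one_iff, neg_nonpos]
  have hhigh : T - T * exp (-s) ≤ t ↔ s ≤ logTime T t := by
    rw [logTime, le_log_iff_exp_le (div_pos hT (sub_pos.2 ht)), le_div_iff₀' (sub_pos.2 ht),
      exp_neg, sub_le_comm, ← div_eq_mul_inv, le_div_iff₀ (exp_pos s)]
  exact and_congr hlow hhigh

theorem logTimeKernel_fker (hT : 0 < T) (ht : t < T) {s r : ℝ}
    (hs : s ∈ Set.Icc 0 (logTime T t)) (hr : r ∈ Set.Icc 0 (logTime T t)) :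
    logTimeKernel T (fker T α t) s r =
      1 / (2 * √(lam T α t)) * exp (-((2 * α - 1) / 2 * |s - r|)) := by
  have hanti : Antitone fun s => T * exp (-s) := fun s r h => by dsimp only; gcongr
  have hmax : T - max (T - T * exp (-s)) (T - T * exp (-r)) = T * exp (-max s r) := by
    rw [hanti.map_max, max_sub_sub_left, sub_sub_cancel]
  have hmin : T - min (T - T * exp (-s)) (T - T * exp (-r)) = T * exp (-min s r) := by
    rw [hanti.map_min, min_sub_sub_left, sub_sub_cancel]
  have hrpow (x β : ℝ) : (T * exp (-x)) ^ β = exp (β * (log T - x)) := by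
    rw [rpow_def_of_pos (by positivity), log_mul hT.ne' (exp_ne_zero _), log_exp]
    ring_nf
  have hexp : T * exp (-(s + r) / 2) * (T * exp (-max s r)) ^ (α - 1) *
      (T * exp (-min s r)) ^ (-α) = exp (-((2 * α - 1) / 2 * |s - r|)) := by
    nth_rw 1 [hrpow, hrpow, ← exp_log hT]
    rw [← exp_add, ← exp_add, ← exp_add, exp_eq_exp]
    linear_combination (1 / 2) * max_add_min s r - ((2 * α - 1) / 2) * max_sub_min_eq_abs' s r
  rw [logTimeKernel, fker, if_pos ⟨(sub_mul_exp_neg_mem_Icc_iff hT ht).2 hs,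
    (sub_mul_exp_neg_mem_Icc_iff hT ht).2 hr⟩, hmax, hmin, ← hexp]
  ring

theorem logTimeKernel_fker_eq_zero (hT : 0 < T) (ht : t < T) {s r : ℝ}
    (h : s ∉ Set.Icc 0 (logTime T t) ∨ r ∉ Set.Icc 0 (logTime T t)) :
    logTimeKernel T (fker T α t) s r = 0 := by
  rw [logTimeKernel, fker, if_neg, mul_zero]
  rw [sub_mul_exp_neg_mem_Icc_iff hT ht, sub_mul_exp_neg_mem_Icc_iff hT ht]
  tauto

theorem lam_nonneg (hα : 1 / 2 ≤ α) (T t : ℝ) : 0 ≤ lam T α t :=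
  div_nonneg (abs_nonneg _) (by linarith)

theorem logTimeKernel_contr_fker (hT : 0 < T) (hα : 1 / 2 ≤ α) (ht : t < T) {s r : ℝ}
    (hs : s ∈ Set.Icc 0 (logTime T t)) (hr : r ∈ Set.Icc 0 (logTime T t)) :
    logTimeKernel T (contr T (fker T α t) (fker T α t)) s r =
      1 / (4 * lam T α t) * ∫ w in Set.Icc 0 (logTime T t),
        exp (-((2 * α - 1) / 2 * |s - w|)) * exp (-((2 * α - 1) / 2 * |w - r|)) := by
  have hcoeff : (1 / (2 * √(lam T α t))) ^ 2 = 1 / (4 * lam T α t) := by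
    rw [div_pow, mul_pow, sq_sqrt (lam_nonneg hα T t)]
    norm_num
  rw [logTimeKernel_contr hT, setIntegral_Ici_eq_setIntegral_Icc fun w hw => by
    rw [logTimeKernel_fker_eq_zero hT ht (.inr hw), zero_mul], ← hcoeff, ← integral_const_mul]
  refine setIntegral_congr_fun measurableSet_Icc fun w hw => ?_
  simp only [logTimeKernel_fker hT ht hs hw, logTimeKernel_fker hT ht hr hw, abs_sub_comm r w]
  ring

theorem logTimeKernel_contr_fker_eq_zero (hT : 0 < T) (ht : t < T) {s r : ℝ}
    (h : s ∉ Set.Icc 0 (logTime T t) ∨ r ∉ Set.Icc 0 (logTime T t)) :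
    logTimeKernel T (contr T (fker T α t) (fker T α t)) s r = 0 := by
  rw [logTimeKernel_contr hT]
  refine integral_eq_zero_of_ae (.of_forall fun w => mul_eq_zero.2 ?_)
  exact h.imp (fun h => logTimeKernel_fker_eq_zero hT ht (.inl h))
    fun h => logTimeKernel_fker_eq_zero hT ht (.inl h)

theorem normSq_contr_fker (hT : 0 < T) (hα : 1 / 2 ≤ α) (ht : t < T) :
    normSq T (contr T (fker T α t) (fker T α t)) =
      (1 / (4 * lam T α t)) ^ 2 *
        ∫ s in Set.Icc 0 (logTime T t), ∫ r in Set.Icc 0 (logTime T t),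
          (∫ w in Set.Icc 0 (logTime T t),
            exp (-((2 * α - 1) / 2 * |s - w|)) * exp (-((2 * α - 1) / 2 * |w - r|))) ^ 2 := by
  have hzero {s r : ℝ} (h : s ∉ Set.Icc 0 (logTime T t) ∨ r ∉ Set.Icc 0 (logTime T t)) :
      logTimeKernel T (contr T (fker T α t) (fker T α t)) s r ^ 2 = 0 := by
    rw [logTimeKernel_contr_fker_eq_zero hT ht h, sq, zero_mul]
  rw [normSq_eq_setIntegral_sq_logTimeKernel hT, setIntegral_Ici_eq_setIntegral_Icc fun s hs => by
    simp only [hzero (.inl hs), integral_zero], ← integral_const_mul]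
  refine setIntegral_congr_fun measurableSet_Icc fun s hs => ?_
  simp only [← integral_const_mul]
  rw [setIntegral_Ici_eq_setIntegral_Icc fun r hr => hzero (.inr hr)]
  refine setIntegral_congr_fun measurableSet_Icc fun r hr => ?_
  rw [logTimeKernel_contr_fker hT hα ht hs hr, mul_pow]

end LogTime

section Asymptotics

variable {T α : ℝ}

theorem tendsto_log_sub_nhdsLT (T : ℝ) : Tendsto (fun t => log (T - t)) (𝓝[<] T) atBot := by
  refine tendsto_log_nhdsGT_zero.comp (tendsto_nhdsWithin_iff.2 ⟨?_, ?_⟩)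
  · exact ((continuous_sub_left T).tendsto' T 0 (sub_self T)).mono_left nhdsWithin_le_nhds
  · filter_upwards [self_mem_nhdsWithin] with t (ht : t < T) using sub_pos.2 ht

theorem tendsto_lam (hα : 1 / 2 < α) (T : ℝ) : Tendsto (lam T α) (𝓝[<] T) atTop :=
  (tendsto_abs_atBot_atTop.comp (tendsto_log_sub_nhdsLT T)).atTop_div_const (by linarith)

theorem logTime_eq (hT : 0 < T) {t : ℝ} (ht : t < T) : logTime T t = log T - log (T - t) :=
  log_div hT.ne' (sub_pos.2 ht).ne'

theorem tendsto_logTime (hT : 0 < T) : Tendsto (logTime T) (𝓝[<] T) atTop := by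
  refine (tendsto_atTop_add_const_left _ (log T)
    (tendsto_neg_atBot_atTop.comp (tendsto_log_sub_nhdsLT T))).congr' ?_
  filter_upwards [self_mem_nhdsWithin] with t ht
  rw [logTime_eq hT ht]
  rfl

theorem tendsto_logTime_div_lam (hT : 0 < T) (hα : 1 / 2 < α) :
    Tendsto (fun t => logTime T t / lam T α t) (𝓝[<] T) (𝓝 (2 * α - 1)) := by
  have hlim := ((tendsto_lam hα T).const_div_atTop (log T)).add_const (2 * α - 1)
  rw [zero_add] at hlim
  refine hlim.congr' ?_
  filter_upwards [self_mem_nhdsWithin, (tendsto_log_sub_nhdsLT T).eventually_lt_atBot 0]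
    with t ht hlog
  have hβ : 2 * α - 1 ≠ 0 := by linarith
  have := hlog.ne
  rw [logTime_eq hT ht, lam, abs_of_neg hlog]
  field_simp
  ring

theorem tendsto_lam_mul_normSq_contr_fker (hT : 0 < T) (hα : 1 / 2 < α) :
    Tendsto (fun t => lam T α t * normSq T (contr T (fker T α t) (fker T α t)))
      (𝓝[<] T) (𝓝 (5 / (2 * (2 * α - 1)) ^ 2)) := by
  have ha : 0 < (2 * α - 1) / 2 := by linarith
  have hk := integrable_exp_neg_mul_abs ha
  have hk2 := memLp_two_exp_neg_mul_abs ha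
  have henergy := (tendsto_integral_sq_truncatedConvolution_div hk hk2 hk hk2).comp
    (tendsto_logTime hT)
  rw [integral_sq_convolution_exp_neg_mul_abs ha] at henergy
  have hlim := ((tendsto_logTime_div_lam hT hα).mul henergy).const_mul (1 / 16)
  have hconst : 1 / 16 * ((2 * α - 1) * (5 / (2 * ((2 * α - 1) / 2) ^ 3))) =
      5 / (2 * (2 * α - 1)) ^ 2 := by
    have hβ : 2 * α - 1 ≠ 0 := by linarith
    field_simp
    norm_num
  rw [hconst] at hlim
  refine hlim.congr' ?_
  filter_upwards [self_mem_nhdsWithin, (tendsto_lam hα T).eventually_gt_atTop 0,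
    (tendsto_logTime hT).eventually_gt_atTop 0] with t ht hlam hL
  rw [normSq_contr_fker hT hα.le ht, Function.comp_apply]
  field_simp
  ring

end Asymptotics

theorem stmt_17 (T α : ℝ) (hT : 0 < T) (hα : 1 / 2 < α) :
    Tendsto (fun t => Real.sqrt (lam T α t) *
        Real.sqrt (normSq T (contr T (fker T α t) (fker T α t))))
      (𝓝[<] T) (𝓝 (Real.sqrt 5 / (2 * (2 * α - 1))))
    ∧
    Tendsto (fun t => Real.sqrt (normSq T (contr T (fker T α t) (fker T α t))))
      (𝓝[<] T) (𝓝 0) := by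
  have hβ : 0 < 2 * α - 1 := by linarith
  have hmain : Tendsto (fun t => Real.sqrt (lam T α t) *
      Real.sqrt (normSq T (contr T (fker T α t) (fker T α t))))
      (𝓝[<] T) (𝓝 (Real.sqrt 5 / (2 * (2 * α - 1)))) := by
    have h := (tendsto_lam_mul_normSq_contr_fker hT hα).sqrt
    rw [sqrt_div (by norm_num), sqrt_sq (by positivity)] at h
    exact h.congr fun t => sqrt_mul (lam_nonneg hα.le T t) _
  refine ⟨hmain, ?_⟩
  have hinv := tendsto_inv_atTop_zero.comp (tendsto_sqrt_atTop.comp (tendsto_lam hα T))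
  have h := hinv.mul hmain
  rw [zero_mul] at h
  refine h.congr' ?_
  filter_upwards [(tendsto_lam hα T).eventually_gt_atTop 0] with t ht
  have := (sqrt_pos.2 ht).ne'
  simp only [Function.comp_apply]
  rw [inv_mul_cancel_left₀ this]
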